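/- arXiv:1501.01848 — 4 statements merged into one kernel-verified Lean document; each statement's English description precedes it below -/
import Mathlib

section
/- Let n ≥ 1 and k ≥ 1 be integers, let G be a homogeneous polynomial of degree k in n variables with real coefficients, let B be a positive definite symmetric real n×n matrix, and let α > 0 be real. Then ∫_{ℝⁿ} G(x)·(xᵀBx)^{-k/2}·exp(−α·(xᵀBx)/4) dx = (α/4)^{k/2} · Γ(n/2)/Γ((k+n)/2) · ∫_{ℝⁿ} G(x)·exp(−α·(xᵀBx)/4) dx, where the integrand on the left is interpreted as 0 at x = 0 and Γ denotes the Gamma function. -/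
open MeasureTheory Real Matrix

/-!
In polar coordinates `x = r • s` the radial part of the integral of `g x * exp (-c * q x)` is a
Gamma integral, where `g` is homogeneous of degree `d` and `q` is positive and homogeneous of degree
`p`. With `n` the dimension, what remains is
`c ^ (-(d + n) / p) * (Γ((d + n) / p) / p)` times the integral of `g * q ^ (-(d + n) / p)` over the
unit sphere. Replacing `g` by `g * q ^ (-d / p)`, which has degree `0`, changes the factor in front
but not the spherical integrand.
-/

open Set Module Metric

section PolarCoordinates

variable {F : Type*} [NormedAddCommGroup F] [NormedSpace ℝ F]

lemma integrable_volumeIoiPow_iff {n : ℕ} {f : ℝ → F} :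
    Integrable (fun r : Ioi (0 : ℝ) ↦ f r) (.volumeIoiPow n) ↔
      IntegrableOn (fun r ↦ r ^ n • f r) (Ioi 0) := by
  rw [integrableOn_iff_comap_subtypeVal measurableSet_Ioi, Measure.volumeIoiPow,
    integrable_withDensity_iff_integrable_smul' (by fun_prop) (by simp)]
  refine integrable_congr (.of_forall fun r ↦ ?_)
  simp [ENNReal.toReal_ofReal (pow_nonneg r.2.out.le n)]

lemma integral_volumeIoiPow (n : ℕ) (f : ℝ → F) :
    ∫ r : Ioi (0 : ℝ), f r ∂.volumeIoiPow n = ∫ r in Ioi (0 : ℝ), r ^ n • f r := by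
  rw [Measure.volumeIoiPow, integral_withDensity_eq_integral_toReal_smul (by fun_prop) (by simp),
    ← integral_subtype_comap measurableSet_Ioi fun r ↦ r ^ n • f r]
  refine integral_congr_ae (.of_forall fun r ↦ ?_)
  simp only [ENNReal.toReal_ofReal (pow_nonneg r.2.out.le n)]

lemma integral_eq_integral_toSphere_prod_volumeIoiPow {E : Type*} [NormedAddCommGroup E]
    [NormedSpace ℝ E] [FiniteDimensional ℝ E] [Nontrivial E] [MeasurableSpace E] [BorelSpace E]
    (μ : Measure E) [μ.IsAddHaarMeasure] (f : E → F) :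
    ∫ x, f x ∂μ =
      ∫ z, f (z.2.1 • z.1.1) ∂μ.toSphere.prod (.volumeIoiPow (finrank ℝ E - 1)) := by
  have polar (x : ({0}ᶜ : Set E)) :
      f x = f ((homeomorphUnitSphereProd E x).2.1 • (homeomorphUnitSphereProd E x).1.1) := by
    rw [← homeomorphUnitSphereProd_symm_apply_coe, Homeomorph.symm_apply_apply]
  calc ∫ x, f x ∂μ = ∫ x : ({0}ᶜ : Set E), f x ∂μ.comap (↑) := by
        rw [integral_subtype_comap (measurableSet_singleton _).compl f, restrict_compl_singleton]
    _ = ∫ z, f (z.2.1 • z.1.1) ∂μ.toSphere.prod (.volumeIoiPow (finrank ℝ E - 1)) := by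
        simp_rw [polar]
        exact μ.measurePreserving_homeomorphUnitSphereProd.integral_comp
          (Homeomorph.measurableEmbedding _) fun z ↦ f (z.2.1 • z.1.1)

end PolarCoordinates

section RadialIntegral

variable {n : ℕ} {d p : ℝ}

lemma eqOn_pow_smul_rpow_mul (n : ℕ) (d : ℝ) (φ : ℝ → ℝ) :
    EqOn (fun r ↦ r ^ n • (r ^ d * φ r)) (fun r ↦ r ^ (n + d) * φ r) (Ioi 0) := fun r hr ↦ by
  simp only [smul_eq_mul, rpow_add hr, rpow_natCast, mul_assoc]

lemma integrable_volumeIoiPow_rpow_mul_exp_neg_mul_rpow {b : ℝ}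
    (hd : -(n + 1) < d) (hp : 0 < p) (hb : 0 < b) :
    Integrable (fun r : Ioi (0 : ℝ) ↦ r.1 ^ d * exp (-b * r.1 ^ p)) (.volumeIoiPow n) := by
  rw [integrable_volumeIoiPow_iff (f := fun r ↦ r ^ d * exp (-b * r ^ p)),
    integrableOn_congr_fun (eqOn_pow_smul_rpow_mul n d _) measurableSet_Ioi]
  exact integrableOn_rpow_mul_exp_neg_mul_rpow (by linarith) hp hb

lemma integral_volumeIoiPow_rpow_mul_exp_neg_mul_rpow {b : ℝ}
    (hd : -(n + 1) < d) (hp : 0 < p) (hb : 0 < b) :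
    ∫ r : Ioi (0 : ℝ), r.1 ^ d * exp (-b * r.1 ^ p) ∂.volumeIoiPow n =
      Gamma ((d + (n + 1)) / p) / p * b ^ (-(d + (n + 1)) / p) := by
  rw [integral_volumeIoiPow n fun r ↦ r ^ d * exp (-b * r ^ p),
    setIntegral_congr_fun measurableSet_Ioi (eqOn_pow_smul_rpow_mul n d _),
    integral_rpow_mul_exp_neg_mul_rpow hp (by linarith) hb]
  ring_nf

variable {X : Type*} [MeasurableSpace X] {σ : Measure X} {g w : X → ℝ}

lemma integrable_prod_mul_rpow_mul_exp_neg_mul_rpow (hd : -(n + 1) < d) (hp : 0 < p)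
    (hw : Measurable w) (hw_pos : ∀ s, 0 < w s)
    (hgw : Integrable (fun s ↦ g s * w s ^ (-(d + (n + 1)) / p)) σ) :
    Integrable (fun z : X × Ioi (0 : ℝ) ↦ g z.1 * (z.2.1 ^ d * exp (-w z.1 * z.2.1 ^ p)))
      (σ.prod (.volumeIoiPow n)) := by
  have hg_meas : AEStronglyMeasurable g σ := by
    refine (hgw.aestronglyMeasurable.mul
      (hw.pow_const ((d + (n + 1)) / p)).aestronglyMeasurable).congr (.of_forall fun s ↦ ?_)
    simp only [Pi.mul_apply]
    rw [mul_assoc, ← rpow_add (hw_pos s), neg_div, neg_add_cancel, rpow_zero, mul_one]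
  have h_meas : AEStronglyMeasurable (fun z : X × Ioi (0 : ℝ) ↦
      g z.1 * (z.2.1 ^ d * exp (-w z.1 * z.2.1 ^ p))) (σ.prod (.volumeIoiPow n)) :=
    hg_meas.comp_fst.mul (Measurable.aestronglyMeasurable (by fun_prop))
  have integral_norm (s : X) :
      ∫ r : Ioi (0 : ℝ), ‖g s * (r.1 ^ d * exp (-w s * r.1 ^ p))‖ ∂.volumeIoiPow n =
        Gamma ((d + (n + 1)) / p) / p * ‖g s * w s ^ (-(d + (n + 1)) / p)‖ := by
    have norm_radial (r : Ioi (0 : ℝ)) :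
        ‖r.1 ^ d * exp (-w s * r.1 ^ p)‖ = r.1 ^ d * exp (-w s * r.1 ^ p) :=
      norm_of_nonneg (mul_nonneg (rpow_nonneg r.2.out.le d) (exp_nonneg _))
    simp_rw [norm_mul (g s), norm_radial, norm_of_nonneg (rpow_nonneg (hw_pos s).le _)]
    rw [integral_const_mul, integral_volumeIoiPow_rpow_mul_exp_neg_mul_rpow hd hp (hw_pos s),
      mul_left_comm]
  rw [integrable_prod_iff h_meas]
  simp_rw [integral_norm]
  exact ⟨.of_forall fun s ↦
    (integrable_volumeIoiPow_rpow_mul_exp_neg_mul_rpow hd hp (hw_pos s)).const_mul _,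
    hgw.norm.const_mul _⟩

lemma integral_prod_mul_rpow_mul_exp_neg_mul_rpow [SFinite σ] (hd : -(n + 1) < d) (hp : 0 < p)
    (hw : Measurable w) (hw_pos : ∀ s, 0 < w s)
    (hgw : Integrable (fun s ↦ g s * w s ^ (-(d + (n + 1)) / p)) σ) :
    ∫ z : X × Ioi (0 : ℝ), g z.1 * (z.2.1 ^ d * exp (-w z.1 * z.2.1 ^ p))
        ∂σ.prod (.volumeIoiPow n) =
      Gamma ((d + (n + 1)) / p) / p * ∫ s, g s * w s ^ (-(d + (n + 1)) / p) ∂σ := by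
  rw [integral_prod _ (integrable_prod_mul_rpow_mul_exp_neg_mul_rpow hd hp hw hw_pos hgw)]
  simp_rw [integral_const_mul,
    fun s ↦ integral_volumeIoiPow_rpow_mul_exp_neg_mul_rpow hd hp (hw_pos s),
    mul_left_comm (g _), integral_const_mul]

end RadialIntegral

/-- `f` is positively homogeneous of degree `d` away from the origin. The value of `f` at `0` is
unconstrained, so that functions of negative degree, singular at the origin, are included. -/
def IsPosHomogeneous {E : Type*} [Zero E] [SMul ℝ E] (d : ℝ) (f : E → ℝ) : Prop :=
  ∀ ⦃r : ℝ⦄, 0 < r → ∀ ⦃x : E⦄, x ≠ 0 → f (r • x) = r ^ d * f x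

namespace IsPosHomogeneous

section Algebra

variable {E : Type*} [Zero E] [SMul ℝ E] {d e : ℝ} {f g : E → ℝ}

lemma mul (hf : IsPosHomogeneous d f) (hg : IsPosHomogeneous e g) :
    IsPosHomogeneous (d + e) fun x ↦ f x * g x := fun r hr x hx ↦ by
  simp only [hf hr hx, hg hr hx, rpow_add hr, mul_mul_mul_comm]

lemma const_mul (hf : IsPosHomogeneous d f) (c : ℝ) :
    IsPosHomogeneous d fun x ↦ c * f x := fun r hr x hx ↦ by
  simp only [hf hr hx, mul_left_comm]

lemma rpow_const (hf : IsPosHomogeneous d f) (hf_nonneg : ∀ x ≠ 0, 0 ≤ f x) (e : ℝ) :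
    IsPosHomogeneous (d * e) fun x ↦ f x ^ e := fun r hr x hx ↦ by
  simp only [hf hr hx, mul_rpow (rpow_nonneg hr.le d) (hf_nonneg x hx), rpow_mul hr.le]

end Algebra

section Integral

variable {E : Type*} [NormedAddCommGroup E] [NormedSpace ℝ E] [FiniteDimensional ℝ E]
  [Nontrivial E] [MeasurableSpace E] [BorelSpace E] (μ : Measure E) [μ.IsAddHaarMeasure]
  {c d p : ℝ} {g q : E → ℝ}

lemma integral_mul_exp_neg (hd : -(finrank ℝ E : ℝ) < d) (hp : 0 < p)
    (hg : IsPosHomogeneous d g) (hg_cont : ContinuousOn g (sphere 0 1))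
    (hq : IsPosHomogeneous p q) (hq_cont : ContinuousOn q (sphere 0 1))
    (hq_pos : ∀ x ≠ 0, 0 < q x) :
    ∫ x, g x * exp (-q x) ∂μ = Gamma ((d + finrank ℝ E) / p) / p *
      ∫ s : sphere (0 : E) 1, g s * q s ^ (-(d + finrank ℝ E) / p) ∂μ.toSphere := by
  have ne_zero (s : sphere (0 : E) 1) : s.1 ≠ 0 := ne_zero_of_mem_unit_sphere s
  have finrank_eq : ((finrank ℝ E - 1 : ℕ) : ℝ) + 1 = finrank ℝ E := by
    rw [Nat.cast_pred finrank_pos, sub_add_cancel]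
  rw [continuousOn_iff_continuous_domRestrict] at hg_cont hq_cont
  have hgq_cont : Continuous fun s : sphere (0 : E) 1 ↦ g s * q s ^ (-(d + finrank ℝ E) / p) :=
    hg_cont.mul (hq_cont.rpow_const fun s ↦ .inl (hq_pos s (ne_zero s)).ne')
  have hgq := hgq_cont.integrable_of_hasCompactSupport (μ := μ.toSphere) (.of_compactSpace _)
  have polar (z : sphere (0 : E) 1 × Ioi (0 : ℝ)) :
      g (z.2.1 • z.1.1) * exp (-q (z.2.1 • z.1.1)) =
        g z.1 * (z.2.1 ^ d * exp (-q z.1 * z.2.1 ^ p)) := by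
    rw [hg z.2.2 (ne_zero z.1), hq z.2.2 (ne_zero z.1)]
    ring_nf
  rw [integral_eq_integral_toSphere_prod_volumeIoiPow]
  simp_rw [polar]
  rw [← finrank_eq] at hd hgq ⊢
  exact integral_prod_mul_rpow_mul_exp_neg_mul_rpow hd hp hq_cont.measurable
    (fun s ↦ hq_pos s (ne_zero s)) hgq

lemma integral_mul_exp_neg_const_mul (hd : -(finrank ℝ E : ℝ) < d) (hp : 0 < p) (hc : 0 < c)
    (hg : IsPosHomogeneous d g) (hg_cont : ContinuousOn g (sphere 0 1))
    (hq : IsPosHomogeneous p q) (hq_cont : ContinuousOn q (sphere 0 1))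
    (hq_pos : ∀ x ≠ 0, 0 < q x) :
    ∫ x, g x * exp (-(c * q x)) ∂μ =
      c ^ (-(d + finrank ℝ E) / p) * (Gamma ((d + finrank ℝ E) / p) / p) *
        ∫ s : sphere (0 : E) 1, g s * q s ^ (-(d + finrank ℝ E) / p) ∂μ.toSphere := by
  rw [hg.integral_mul_exp_neg μ hd hp hg_cont (hq.const_mul c) (hq_cont.const_mul c)
    fun x hx ↦ mul_pos hc (hq_pos x hx)]
  have mul_rpow_sphere (s : sphere (0 : E) 1) (e : ℝ) : (c * q s) ^ e = c ^ e * q s ^ e :=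
    mul_rpow hc.le (hq_pos s (ne_zero_of_mem_unit_sphere s)).le
  simp_rw [mul_rpow_sphere, mul_left_comm (g _), integral_const_mul]
  ring

end Integral

end IsPosHomogeneous

theorem stmt_0_general {E : Type*} [NormedAddCommGroup E] [NormedSpace ℝ E]
    [FiniteDimensional ℝ E] [Nontrivial E] [MeasurableSpace E] [BorelSpace E]
    (μ : Measure E) [μ.IsAddHaarMeasure] {c d p : ℝ} {g q : E → ℝ}
    (hd : -(finrank ℝ E : ℝ) < d) (hp : 0 < p) (hc : 0 < c)
    (hg : IsPosHomogeneous d g) (hg_cont : ContinuousOn g (sphere 0 1))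
    (hq : IsPosHomogeneous p q) (hq_cont : ContinuousOn q (sphere 0 1))
    (hq_pos : ∀ x ≠ 0, 0 < q x) :
    ∫ x, g x * q x ^ (-d / p) * exp (-(c * q x)) ∂μ =
      c ^ (d / p) * (Gamma (finrank ℝ E / p) / Gamma ((d + finrank ℝ E) / p)) *
        ∫ x, g x * exp (-(c * q x)) ∂μ := by
  have hq_sphere (s : sphere (0 : E) 1) : 0 < q s := hq_pos s (ne_zero_of_mem_unit_sphere s)
  have hgq : IsPosHomogeneous 0 fun x ↦ g x * q x ^ (-d / p) := by
    simpa only [mul_div_cancel₀ _ hp.ne', add_neg_cancel] using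
      hg.mul (hq.rpow_const (fun x hx ↦ (hq_pos x hx).le) (-d / p))
  have hgq_cont : ContinuousOn (fun x ↦ g x * q x ^ (-d / p)) (sphere 0 1) :=
    hg_cont.mul (hq_cont.rpow_const fun s hs ↦ .inl (hq_sphere ⟨s, hs⟩).ne')
  have exponent_eq : -(d + finrank ℝ E) / p = -d / p + -finrank ℝ E / p := by ring
  have sphere_eq (s : sphere (0 : E) 1) :
      g s * q s ^ (-d / p) * q s ^ (-finrank ℝ E / p) =
        g s * q s ^ (-(d + finrank ℝ E) / p) := by
    rw [exponent_eq, rpow_add (hq_sphere s), mul_assoc]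
  have const_eq : c ^ (-finrank ℝ E / p) = c ^ (d / p) * c ^ (-(d + finrank ℝ E) / p) := by
    rw [← rpow_add hc]
    ring_nf
  have hΓ : Gamma ((d + finrank ℝ E) / p) ≠ 0 :=
    (Gamma_pos_of_pos (div_pos (by linarith) hp)).ne'
  rw [hgq.integral_mul_exp_neg_const_mul μ (by simp [finrank_pos]) hp hc hgq_cont hq hq_cont hq_pos,
    hg.integral_mul_exp_neg_const_mul μ hd hp hc hg_cont hq hq_cont hq_pos]
  simp_rw [zero_add, sphere_eq, const_eq]
  field_simp

lemma isPosHomogeneous_eval {ι : Type*} {G : MvPolynomial ι ℝ} {k : ℕ}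
    (hG : G.IsHomogeneous k) :
    IsPosHomogeneous k fun x ↦ MvPolynomial.eval x G := fun r _ x _ ↦ by
  simp only [MvPolynomial.eval_eq, Finset.mul_sum, Pi.smul_apply, smul_eq_mul, mul_pow,
    Finset.prod_mul_distrib, Finset.prod_pow_eq_pow_sum, rpow_natCast]
  refine Finset.sum_congr rfl fun m hm ↦ ?_
  rw [← hG.degree_eq_sum_deg_support hm, mul_left_comm]

lemma isPosHomogeneous_dotProduct_mulVec {ι : Type*} [Fintype ι] (B : Matrix ι ι ℝ) :
    IsPosHomogeneous 2 fun x ↦ x ⬝ᵥ B *ᵥ x := fun r _ x _ ↦ by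
  simp only [mulVec_smul, smul_dotProduct, dotProduct_smul, smul_eq_mul, rpow_two]
  ring

/-- Lemma 2.2 of Kopp–Miller for a homogeneous polynomial `G` of degree `k`
and a positive definite symmetric matrix `B`. -/
theorem stmt_0 (n k : ℕ) (hn : 1 ≤ n) (hk : 1 ≤ k)
    (G : MvPolynomial (Fin n) ℝ) (hG : G.IsHomogeneous k)
    (B : Matrix (Fin n) (Fin n) ℝ) (hB : B.PosDef)
    (α : ℝ) (hα : 0 < α) :
    (∫ x : Fin n → ℝ,
        (if x = 0 then (0 : ℝ) else
          MvPolynomial.eval x G * (x ⬝ᵥ B.mulVec x) ^ (-(k : ℝ) / 2)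
            * Real.exp (-α * (x ⬝ᵥ B.mulVec x) / 4)))
      = (α / 4) ^ ((k : ℝ) / 2) * (Real.Gamma (n / 2) / Real.Gamma ((k + n) / 2)) *
        ∫ x : Fin n → ℝ, MvPolynomial.eval x G * Real.exp (-α * (x ⬝ᵥ B.mulVec x) / 4) := by
  have : Nonempty (Fin n) := Fin.pos_iff_nonempty.mp hn
  have exponent_eq (y : ℝ) : -α * y / 4 = -(α / 4 * y) := by ring
  have hd : -(finrank ℝ (Fin n → ℝ) : ℝ) < k := by
    rw [finrank_fin_fun]
    exact neg_lt_iff_pos_add.mpr (by positivity)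
  simp_rw [exponent_eq]
  rw [integral_congr_ae ((volume.ae_ne 0).mono fun x hx ↦ if_neg hx)]
  simpa only [finrank_fin_fun] using stmt_0_general volume hd two_pos (by positivity : 0 < α / 4)
    (isPosHomogeneous_eval hG) G.continuous_eval.continuousOn
    (isPosHomogeneous_dotProduct_mulVec B) (by fun_prop)
    fun x hx ↦ by simpa only [star_trivial] using hB.dotProduct_mulVec_pos hx
end

section
/- Let α > 5/2 be real, let w(t) = ∑_{ℓ=0}^∞ (Γ(α)/(Γ(α+ℓ)·ℓ!))·(−t²/4)^ℓ = ₀F₁(α; −t²/4), and define ŵ : ℝ → ℝ by ŵ(x) = (1/(2π))·∫_ℝ cos(t·x)·w(t) dt. Then for every x ∈ ℝ with x ≠ 1 and x ≠ −1, ŵ is differentiable at x and (1 − x²)·ŵ'(x) + (2α − 3)·x·ŵ(x) = 0. -/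
open Real MeasureTheory

/-!
Integrating the Taylor series of the cosine term by term against `(1 - s²)₊ ^ p` gives Poisson's
representation: up to a positive constant, `t ↦ ₀F₁(p + 3/2; -t²/4)` is the cosine transform of
`(1 - s²)₊ ^ p`. For `p > 1`, two integrations by parts show that this transform decays like `t⁻²`,
hence is integrable. Fourier inversion then identifies `ŵ` as a multiple of
`(1 - x²)₊ ^ (α - 3/2)`, which satisfies the differential equation off `±1`.
-/

open Filter Set Topology FourierTransform Nat

section Calculus

variable {E : Type*} [NormedAddCommGroup E] [NormedSpace ℝ E] [CompleteSpace E] {f f' : ℝ → E}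

lemma integral_of_hasDerivAt_off_countable_of_tendsto {m n : E} {S : Set ℝ} (hS : S.Countable)
    (hf : Continuous f) (hff' : ∀ x ∉ S, HasDerivAt f (f' x) x) (hf' : Integrable f')
    (hbot : Tendsto f atBot (𝓝 m)) (htop : Tendsto f atTop (𝓝 n)) : ∫ x, f' x = n - m := by
  have ftc (R : ℝ) : ∫ x in -R..R, f' x = f R - f (-R) :=
    integral_eq_of_hasDerivAt_off_countable f f' hS hf.continuousOn
      (fun x hx ↦ hff' x hx.2) hf'.intervalIntegrable
  refine tendsto_nhds_unique
    (intervalIntegral_tendsto_integral hf' tendsto_neg_atTop_atBot tendsto_id) ?_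
  simpa only [id, ftc, Function.comp_def] using htop.sub (hbot.comp tendsto_neg_atTop_atBot)

lemma integral_eq_zero_of_hasDerivAt_off_countable {S : Set ℝ} (hS : S.Countable)
    (hf : Continuous f) (hff' : ∀ x ∉ S, HasDerivAt f (f' x) x) (hf' : Integrable f')
    (hf₀ : Tendsto f (cocompact ℝ) (𝓝 0)) : ∫ x, f' x = 0 := by
  rw [integral_of_hasDerivAt_off_countable_of_tendsto hS hf hff' hf'
    (hf₀.mono_left atBot_le_cocompact) (hf₀.mono_left atTop_le_cocompact), sub_zero]

end Calculus

section CosTransform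

/-- The unnormalised cosine transform, with the integral over the whole line. -/
noncomputable def cosTransform (f : ℝ → ℝ) (t : ℝ) : ℝ :=
  ∫ s, cos (s * t) * f s

variable {f f' f'' : ℝ → ℝ}

lemma cosTransform_even (f : ℝ → ℝ) : Function.Even (cosTransform f) := fun t ↦ by
  simp only [cosTransform, mul_neg, cos_neg]

lemma cosTransform_const_mul (c : ℝ) (f : ℝ → ℝ) (t : ℝ) :
    cosTransform (fun s ↦ c * f s) t = c * cosTransform f t := by
  simp only [cosTransform, mul_left_comm _ c, integral_const_mul]

lemma integrable_cos_mul (hf : Integrable f) (t : ℝ) : Integrable fun s ↦ cos (s * t) * f s :=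
  hf.bdd_mul (Continuous.aestronglyMeasurable (by fun_prop)) (ae_of_all _ fun _ ↦ abs_cos_le_one _)

lemma integrable_sin_mul (hf : Integrable f) (t : ℝ) : Integrable fun s ↦ sin (s * t) * f s :=
  hf.bdd_mul (Continuous.aestronglyMeasurable (by fun_prop)) (ae_of_all _ fun _ ↦ abs_sin_le_one _)

lemma norm_cos_mul_le (x y : ℝ) : ‖cos x * y‖ ≤ ‖y‖ := by
  rw [norm_mul]
  exact mul_le_of_le_one_left (norm_nonneg y) (abs_cos_le_one x)

lemma norm_cosTransform_le (hf : Integrable f) (t : ℝ) : ‖cosTransform f t‖ ≤ ∫ s, ‖f s‖ :=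
  norm_integral_le_of_norm_le hf.norm (ae_of_all _ fun _ ↦ norm_cos_mul_le _ _)

lemma continuous_cosTransform (hf : Integrable f) : Continuous (cosTransform f) :=
  continuous_of_dominated (fun t ↦ (integrable_cos_mul hf t).aestronglyMeasurable)
    (fun _ ↦ ae_of_all _ fun _ ↦ norm_cos_mul_le _ _) hf.norm
    (ae_of_all _ fun _ ↦ by fun_prop)

lemma integral_sin_mul_eq_zero_of_even (hf : Function.Even f) (t : ℝ) :
    ∫ s, sin (s * t) * f s = 0 := by
  have h := integral_neg_eq_self (fun s ↦ sin (s * t) * f s) volume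
  simp only [neg_mul, sin_neg, hf.eq, integral_neg] at h
  linarith

lemma fourier_ofReal_of_even (hf : Function.Even f) (hfi : Integrable f) (ξ : ℝ) :
    𝓕 (fun s ↦ (f s : ℂ)) ξ = cosTransform f (2 * π * ξ) := by
  have euler (s : ℝ) : Complex.exp (↑(-2 * π * s * ξ) * Complex.I) • (f s : ℂ) =
      ↑(cos (s * (2 * π * ξ)) * f s) - ↑(sin (s * (2 * π * ξ)) * f s) * Complex.I := by
    rw [show -2 * π * s * ξ = -(s * (2 * π * ξ)) by ring, Complex.exp_mul_I,
      ← Complex.ofReal_cos, ← Complex.ofReal_sin, cos_neg, sin_neg, smul_eq_mul]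
    push_cast
    ring
  simp only [fourier_real_eq_integral_exp_smul, euler]
  rw [integral_sub (integrable_cos_mul hfi _).ofReal
      ((integrable_sin_mul hfi _).ofReal.mul_const _), integral_mul_const,
    integral_complex_ofReal, integral_complex_ofReal, integral_sin_mul_eq_zero_of_even hf,
    Complex.ofReal_zero, zero_mul, sub_zero, cosTransform]

theorem cosTransform_cosTransform (hf : Function.Even f) (hfc : Continuous f) (hfi : Integrable f)
    (hFi : Integrable (cosTransform f)) (x : ℝ) :
    cosTransform (cosTransform f) x = 2 * π * f x := by
  let F : ℝ → ℝ := fun ξ ↦ cosTransform f (2 * π * ξ)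
  have hF : 𝓕 (fun s ↦ (f s : ℂ)) = fun ξ ↦ (F ξ : ℂ) :=
    funext fun ξ ↦ fourier_ofReal_of_even hf hfi ξ
  have F_even : Function.Even F := fun ξ ↦ by
    simp only [F, mul_neg, (cosTransform_even f).eq]
  have F_int : Integrable F := hFi.comp_mul_left' (by positivity)
  have inversion : cosTransform F (2 * π * -x) = f x := by
    have h := congrFun (Continuous.fourierInv_fourier_eq (f := fun s ↦ (f s : ℂ)) (by fun_prop)
      hfi.ofReal (hF ▸ F_int.ofReal)) x
    rw [hF, fourierInv_eq_fourier_neg, fourier_ofReal_of_even F_even F_int] at h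
    exact_mod_cast h
  have rescale := Measure.integral_comp_mul_left (fun t ↦ cos (t * x) * cosTransform f t) (2 * π)
  rw [abs_of_pos (by positivity), smul_eq_mul, inv_mul_eq_div,
    eq_div_iff (by positivity)] at rescale
  rw [cosTransform, ← rescale, ← inversion, mul_comm, mul_neg, (cosTransform_even F).eq]
  simp only [cosTransform, F, mul_left_comm, mul_assoc]

lemma sq_mul_cosTransform {S : Set ℝ} (hS : S.Countable) (hf : Continuous f) (hf' : Continuous f')
    (hff' : ∀ x ∉ S, HasDerivAt f (f' x) x) (hff'' : ∀ x ∉ S, HasDerivAt f' (f'' x) x)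
    (hfi : Integrable f) (hfi'' : Integrable f'') (hf₀ : Tendsto f (cocompact ℝ) (𝓝 0))
    (hf₀' : Tendsto f' (cocompact ℝ) (𝓝 0)) (t : ℝ) :
    t ^ 2 * cosTransform f t = -cosTransform f'' t := by
  have hsin (x : ℝ) : HasDerivAt (fun s ↦ sin (s * t)) (cos (x * t) * t) x := by
    simpa using ((hasDerivAt_id x).mul_const t).sin
  have hcos (x : ℝ) : HasDerivAt (fun s ↦ cos (s * t)) (-sin (x * t) * t) x := by
    simpa using ((hasDerivAt_id x).mul_const t).cos
  -- Both integrations by parts at once: the terms in `sin (x * t) * f' x` cancel.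
  have hderiv (x) (hx : x ∉ S) : HasDerivAt
      (fun s ↦ t * (f s * sin (s * t)) + f' s * cos (s * t))
      (t ^ 2 * (cos (x * t) * f x) + cos (x * t) * f'' x) x :=
    ((((hff' x hx).fun_mul (hsin x)).const_mul t).fun_add
      ((hff'' x hx).fun_mul (hcos x))).congr_deriv (by ring)
  have hsin_bdd : IsBoundedUnder (· ≤ ·) (cocompact ℝ) (norm ∘ fun s ↦ sin (s * t)) :=
    isBoundedUnder_of ⟨1, fun _ ↦ abs_sin_le_one _⟩
  have hcos_bdd : IsBoundedUnder (· ≤ ·) (cocompact ℝ) (norm ∘ fun s ↦ cos (s * t)) :=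
    isBoundedUnder_of ⟨1, fun _ ↦ abs_cos_le_one _⟩
  have hlim : Tendsto (fun s ↦ t * (f s * sin (s * t)) + f' s * cos (s * t)) (cocompact ℝ)
      (𝓝 0) := by
    simpa using ((hf₀.zero_mul_isBoundedUnder_le hsin_bdd).const_mul t).add
      (hf₀'.zero_mul_isBoundedUnder_le hcos_bdd)
  have hint := (integrable_cos_mul hfi t).const_mul (t ^ 2)
  have hint'' := integrable_cos_mul hfi'' t
  have h := integral_eq_zero_of_hasDerivAt_off_countable hS (by fun_prop) hderiv
    (hint.add hint'') hlim
  rw [integral_add hint hint'', integral_const_mul] at h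
  exact eq_neg_of_add_eq_zero_left h

theorem integrable_cosTransform_of_hasDerivAt_off_countable {S : Set ℝ} (hS : S.Countable)
    (hf : Continuous f) (hf' : Continuous f') (hff' : ∀ x ∉ S, HasDerivAt f (f' x) x)
    (hff'' : ∀ x ∉ S, HasDerivAt f' (f'' x) x) (hfi : Integrable f) (hfi'' : Integrable f'')
    (hf₀ : Tendsto f (cocompact ℝ) (𝓝 0)) (hf₀' : Tendsto f' (cocompact ℝ) (𝓝 0)) :
    Integrable (cosTransform f) := by
  refine (integrable_inv_one_add_sq.const_mul ((∫ s, ‖f s‖) + ∫ s, ‖f'' s‖)).mono'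
    (continuous_cosTransform hfi).aestronglyMeasurable (ae_of_all _ fun t ↦ ?_)
  rw [← div_eq_mul_inv, le_div_iff₀ (by positivity)]
  calc ‖cosTransform f t‖ * (1 + t ^ 2) = ‖cosTransform f t‖ + ‖t ^ 2 * cosTransform f t‖ := by
        rw [norm_mul, norm_of_nonneg (sq_nonneg t)]
        ring
    _ = ‖cosTransform f t‖ + ‖cosTransform f'' t‖ := by
        rw [sq_mul_cosTransform hS hf hf' hff' hff'' hfi hfi'' hf₀ hf₀', norm_neg]
    _ ≤ _ := add_le_add (norm_cosTransform_le hfi t) (norm_cosTransform_le hfi'' t)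

lemma hasSum_cosTransform (t : ℝ) (hf : AEStronglyMeasurable f)
    (hcosh : Integrable fun s ↦ cosh (s * t) * ‖f s‖) :
    HasSum (fun n : ℕ ↦ (-1) ^ n * t ^ (2 * n) / (2 * n)! * ∫ s, s ^ (2 * n) * f s)
      (cosTransform f t) := by
  have hsum (s : ℝ) := (hasSum_cosh (s * t)).mul_right ‖f s‖
  have h := hasSum_integral_of_dominated_convergence (μ := volume)
    (F := fun (n : ℕ) s ↦ (-1) ^ n * (s * t) ^ (2 * n) / (2 * n)! * f s)
    (fun n s ↦ (s * t) ^ (2 * n) / (2 * n)! * ‖f s‖)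
    (fun n ↦ (Continuous.aestronglyMeasurable (by fun_prop)).mul hf)
    (fun n ↦ ae_of_all _ fun s ↦ by
      simp [← abs_mul, (even_two_mul n).pow_abs])
    (ae_of_all _ fun s ↦ (hsum s).summable)
    (by simpa only [(hsum _).tsum_eq] using hcosh)
    (ae_of_all _ fun s ↦ (hasSum_cos (s * t)).mul_right (f s))
  have hterm (n : ℕ) : ∫ s, (-1) ^ n * (s * t) ^ (2 * n) / (2 * n)! * f s =
      (-1) ^ n * t ^ (2 * n) / (2 * n)! * ∫ s, s ^ (2 * n) * f s := by
    rw [← integral_const_mul]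
    congr 1 with s
    ring
  simpa only [cosTransform, hterm] using h

end CosTransform

section ZeroFOne

/-- The coefficients of the confluent hypergeometric limit function `₀F₁(a; ·)`. -/
noncomputable def zeroFOneCoeff (a : ℝ) (n : ℕ) : ℝ :=
  Gamma a / (Gamma (a + n) * n !)

/-- The confluent hypergeometric limit function `₀F₁(a; u)` of a real variable. -/
noncomputable def zeroFOne (a u : ℝ) : ℝ :=
  ∑' n : ℕ, zeroFOneCoeff a n * u ^ n

lemma zeroFOneCoeff_succ {a : ℝ} (ha : 0 < a) (n : ℕ) :
    zeroFOneCoeff a (n + 1) = zeroFOneCoeff a n / ((a + n) * (n + 1)) := by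
  rw [zeroFOneCoeff, zeroFOneCoeff, Nat.cast_succ, ← add_assoc, Gamma_add_one (by positivity),
    Nat.factorial_succ, Nat.cast_mul, Nat.cast_succ, div_div]
  ring

end ZeroFOne

section BochnerRiesz

/-- The Bochner–Riesz kernel `(1 - x²)₊ ^ p`. It is an indicator rather than a power of a positive
part so that it vanishes off `(-1, 1)` for every exponent, including `p = 0`, where `0 ^ p = 1`. -/
noncomputable def bochnerRiesz (p : ℝ) : ℝ → ℝ :=
  (Ioo (-1) 1).indicator fun x ↦ (1 - x ^ 2) ^ p

variable {p x : ℝ}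

lemma one_sub_sq_pos_of_mem_Ioo (hx : x ∈ Ioo (-1) 1) : 0 < 1 - x ^ 2 := by
  nlinarith [hx.1, hx.2]

lemma bochnerRiesz_even (p : ℝ) : Function.Even (bochnerRiesz p) := fun x ↦ by
  have : -x ∈ Ioo (-1 : ℝ) 1 ↔ x ∈ Ioo (-1) 1 := by
    rw [mem_Ioo, mem_Ioo, neg_lt_neg_iff, neg_lt, and_comm]
  simp only [bochnerRiesz, indicator_apply, this, neg_sq]

lemma bochnerRiesz_nonneg (p x : ℝ) : 0 ≤ bochnerRiesz p x :=
  indicator_nonneg (fun _ hx ↦ rpow_nonneg (one_sub_sq_pos_of_mem_Ioo hx).le p) x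

lemma support_bochnerRiesz (p : ℝ) : Function.support (bochnerRiesz p) = Ioo (-1) 1 := by
  rw [bochnerRiesz, support_indicator, inter_eq_left]
  exact fun x hx ↦ (rpow_pos_of_pos (one_sub_sq_pos_of_mem_Ioo hx) p).ne'

lemma hasCompactSupport_bochnerRiesz (p : ℝ) : HasCompactSupport (bochnerRiesz p) := by
  refine HasCompactSupport.of_support_subset_isCompact (isCompact_Icc (a := -1) (b := 1)) ?_
  rw [support_bochnerRiesz]
  exact Ioo_subset_Icc_self

lemma continuous_bochnerRiesz (hp : 0 < p) : Continuous (bochnerRiesz p) := by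
  refine continuous_indicator (fun x hx ↦ ?_)
    (Continuous.rpow_const (by fun_prop) fun _ ↦ Or.inr hp.le).continuousOn
  rw [frontier_Ioo (by norm_num)] at hx
  rcases hx with rfl | rfl <;> simp [hp.ne']

lemma one_sub_sq_mul_bochnerRiesz (p x : ℝ) :
    (1 - x ^ 2) * bochnerRiesz p x = bochnerRiesz (p + 1) x := by
  by_cases hx : x ∈ Ioo (-1) 1
  · simp only [bochnerRiesz, indicator_of_mem hx]
    rw [rpow_add_one (one_sub_sq_pos_of_mem_Ioo hx).ne', mul_comm]
  · simp only [bochnerRiesz, indicator_of_notMem hx, mul_zero]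

lemma hasDerivAt_bochnerRiesz (p : ℝ) (hx : x ∉ ({-1, 1} : Set ℝ)) :
    HasDerivAt (bochnerRiesz p) (-(2 * p * x * bochnerRiesz (p - 1) x)) x := by
  rw [← frontier_Ioo (a := (-1 : ℝ)) (b := 1) (by norm_num)] at hx
  by_cases hmem : x ∈ Ioo (-1) 1
  · have hpos := one_sub_sq_pos_of_mem_Ioo hmem
    have h : HasDerivAt (fun y : ℝ ↦ 1 - y ^ 2) (-(2 * x)) x := by
      simpa using (hasDerivAt_pow 2 x).const_sub 1
    rw [bochnerRiesz, bochnerRiesz, indicator_of_mem hmem]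
    exact ((h.rpow_const (p := p) (Or.inl hpos.ne')).congr_deriv (by ring)).congr_of_eventuallyEq
      (eqOn_indicator.eventuallyEq_of_mem (isOpen_Ioo.mem_nhds hmem))
  · have hcompl : (Ioo (-1 : ℝ) 1)ᶜ ∈ 𝓝 x := by
      rw [← mem_interior_iff_mem_nhds, interior_compl, mem_compl_iff,
        closure_eq_self_union_frontier]
      exact not_or.mpr ⟨hmem, hx⟩
    rw [bochnerRiesz, bochnerRiesz, indicator_of_notMem hmem, mul_zero, neg_zero]
    exact (hasDerivAt_const x 0).congr_of_eventuallyEq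
      (eqOn_indicator'.eventuallyEq_of_mem hcompl)

lemma integrableOn_one_sub_sq_rpow (hp : -1 < p) :
    IntegrableOn (fun x : ℝ ↦ (1 - x ^ 2) ^ p) (Ioo (-1) 1) := by
  have right : IntervalIntegrable (fun x : ℝ ↦ (1 - x ^ 2) ^ p) volume 0 1 := by
    have h : IntervalIntegrable (fun x : ℝ ↦ (1 - x) ^ p) volume 0 1 := by
      simpa using ((intervalIntegral.intervalIntegrable_rpow' hp (a := 0) (b := 1)).comp_sub_left
        1).symm
    refine (h.continuousOn_mul (g := fun x ↦ (1 + x) ^ p) ?_).congr fun x hx ↦ ?_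
    · refine ContinuousOn.rpow_const (by fun_prop) fun x hx ↦ Or.inl ?_
      rw [uIcc_of_le zero_le_one] at hx
      linarith [hx.1]
    · rw [uIoc_of_le zero_le_one] at hx
      rw [← mul_rpow (by linarith [hx.1]) (by linarith [hx.2])]
      ring_nf
  have left : IntervalIntegrable (fun x : ℝ ↦ (1 - x ^ 2) ^ p) volume (-1) 0 := by
    simpa using right.symm.comp_sub_left 0
  exact (intervalIntegrable_iff_integrableOn_Ioo_of_le (by norm_num)).mp (left.trans right)

lemma integrable_continuous_mul_bochnerRiesz {g : ℝ → ℝ} (hg : Continuous g) (hp : -1 < p) :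
    Integrable fun x ↦ g x * bochnerRiesz p x := by
  simp only [bochnerRiesz, ← indicator_mul_right]
  exact (integrable_indicator_iff measurableSet_Ioo).mpr <|
    (integrableOn_one_sub_sq_rpow hp).continuousOn_mul_of_subset hg.continuousOn isCompact_Icc
      measurableSet_Ioo Ioo_subset_Icc_self

lemma integrable_bochnerRiesz (hp : -1 < p) : Integrable (bochnerRiesz p) := by
  simpa using integrable_continuous_mul_bochnerRiesz continuous_one hp

lemma integral_bochnerRiesz_pos (hp : -1 < p) : 0 < ∫ x, bochnerRiesz p x := by
  rw [integral_pos_iff_support_of_nonneg (bochnerRiesz_nonneg p) (integrable_bochnerRiesz hp),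
    support_bochnerRiesz]
  simp

lemma integrable_cosTransform_bochnerRiesz (hp : 1 < p) :
    Integrable (cosTransform (bochnerRiesz p)) := by
  let f' : ℝ → ℝ := fun s ↦ -(2 * p) * (s * bochnerRiesz (p - 1) s)
  let f'' : ℝ → ℝ := fun s ↦ -(2 * p) *
    (bochnerRiesz (p - 1) s - 2 * (p - 1) * (s ^ 2 * bochnerRiesz (p - 1 - 1) s))
  have hff' (s) (hs : s ∉ ({-1, 1} : Set ℝ)) : HasDerivAt (bochnerRiesz p) (f' s) s :=
    (hasDerivAt_bochnerRiesz p hs).congr_deriv (by ring)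
  have hff'' (s) (hs : s ∉ ({-1, 1} : Set ℝ)) : HasDerivAt f' (f'' s) s :=
    (((hasDerivAt_id' s).fun_mul (hasDerivAt_bochnerRiesz (p - 1) hs)).const_mul _).congr_deriv
      (by ring)
  have hf' : Continuous f' :=
    continuous_const.mul (continuous_id.mul (continuous_bochnerRiesz (by linarith)))
  have hfi'' : Integrable f'' :=
    ((integrable_bochnerRiesz (by linarith)).sub ((integrable_continuous_mul_bochnerRiesz
      (continuous_pow 2) (by linarith)).const_mul _)).const_mul _
  have hsupp' : HasCompactSupport f' := (hasCompactSupport_bochnerRiesz _).mul_left.mul_left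
  exact integrable_cosTransform_of_hasDerivAt_off_countable (Set.toFinite _).countable
    (continuous_bochnerRiesz (by linarith)) hf' hff' hff'' (integrable_bochnerRiesz (by linarith))
    hfi'' (hasCompactSupport_bochnerRiesz p).is_zero_at_infty hsupp'.is_zero_at_infty

lemma integral_pow_mul_bochnerRiesz_succ (hp : -1 < p) (n : ℕ) :
    (p + 3 / 2 + n) * ∫ s, s ^ (2 * (n + 1)) * bochnerRiesz p s =
      (n + 1 / 2) * ∫ s, s ^ (2 * n) * bochnerRiesz p s := by
  have hint (k : ℕ) : Integrable fun s ↦ s ^ k * bochnerRiesz p s :=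
    integrable_continuous_mul_bochnerRiesz (continuous_pow k) hp
  have hderiv (s) (hs : s ∉ ({-1, 1} : Set ℝ)) :
      HasDerivAt (fun s ↦ s ^ (2 * n + 1) * bochnerRiesz (p + 1) s)
        (2 * ((n + 1 / 2) * (s ^ (2 * n) * bochnerRiesz p s) -
          (p + 3 / 2 + n) * (s ^ (2 * (n + 1)) * bochnerRiesz p s))) s := by
    refine ((hasDerivAt_pow (2 * n + 1) s).fun_mul
      (hasDerivAt_bochnerRiesz (p + 1) hs)).congr_deriv ?_
    rw [add_sub_cancel_right, add_tsub_cancel_right, ← one_sub_sq_mul_bochnerRiesz]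
    push_cast
    ring
  have hsupp : HasCompactSupport fun s ↦ s ^ (2 * n + 1) * bochnerRiesz (p + 1) s :=
    (hasCompactSupport_bochnerRiesz _).mul_left
  have h := integral_eq_zero_of_hasDerivAt_off_countable (Set.toFinite {-1, 1}).countable
    ((continuous_pow _).mul (continuous_bochnerRiesz (by linarith))) hderiv
    ((((hint _).const_mul _).sub ((hint _).const_mul _)).const_mul _) hsupp.is_zero_at_infty
  rw [integral_const_mul, integral_sub ((hint _).const_mul _) ((hint _).const_mul _),
    integral_const_mul, integral_const_mul] at h
  linarith

lemma integral_pow_mul_bochnerRiesz (hp : -1 < p) (n : ℕ) :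
    ∫ s, s ^ (2 * n) * bochnerRiesz p s =
      (2 * n)! / 4 ^ n * zeroFOneCoeff (p + 3 / 2) n * ∫ s, bochnerRiesz p s := by
  have ha : 0 < p + 3 / 2 := by linarith
  induction n with
  | zero => simp [zeroFOneCoeff, (Gamma_pos_of_pos ha).ne']
  | succ n ih =>
    have ha' : 0 < p + 3 / 2 + n := by positivity
    have hfact : ((2 * (n + 1))! : ℝ) = (2 * n + 2) * ((2 * n + 1) * (2 * n)!) := by
      rw [mul_add_one, Nat.factorial_succ, Nat.factorial_succ]
      push_cast
      ring
    rw [← mul_right_inj' ha'.ne', integral_pow_mul_bochnerRiesz_succ hp, ih, zeroFOneCoeff_succ ha,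
      hfact]
    generalize p + 3 / 2 + (n : ℝ) = y at ha'
    field_simp
    ring

theorem cosTransform_bochnerRiesz (hp : -1 < p) (t : ℝ) :
    cosTransform (bochnerRiesz p) t =
      (∫ s, bochnerRiesz p s) * zeroFOne (p + 3 / 2) (-t ^ 2 / 4) := by
  have hcosh : Integrable fun s ↦ cosh (s * t) * ‖bochnerRiesz p s‖ := by
    simpa only [norm_of_nonneg (bochnerRiesz_nonneg p _)] using
      integrable_continuous_mul_bochnerRiesz (by fun_prop) hp
  rw [← (hasSum_cosTransform t (integrable_bochnerRiesz hp).aestronglyMeasurable hcosh).tsum_eq,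
    zeroFOne, ← tsum_mul_left]
  congr 1 with n
  rw [integral_pow_mul_bochnerRiesz hp, div_pow, neg_pow (t ^ 2), ← pow_mul]
  field_simp

theorem cosTransform_zeroFOne {a : ℝ} (ha : 5 / 2 < a) (x : ℝ) :
    cosTransform (fun t ↦ zeroFOne a (-t ^ 2 / 4)) x =
      2 * π / (∫ s, bochnerRiesz (a - 3 / 2) s) * bochnerRiesz (a - 3 / 2) x := by
  have hp : 1 < a - 3 / 2 := by linarith
  have hM := (integral_bochnerRiesz_pos (p := a - 3 / 2) (by linarith)).ne'
  have poisson : cosTransform (bochnerRiesz (a - 3 / 2)) = fun t ↦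
      (∫ s, bochnerRiesz (a - 3 / 2) s) * zeroFOne a (-t ^ 2 / 4) := by
    ext t
    rw [cosTransform_bochnerRiesz (by linarith), sub_add_cancel]
  have inversion := cosTransform_cosTransform (bochnerRiesz_even _)
    (continuous_bochnerRiesz (by linarith)) (integrable_bochnerRiesz (by linarith))
    (integrable_cosTransform_bochnerRiesz hp) x
  rw [poisson, cosTransform_const_mul] at inversion
  rw [div_mul_eq_mul_div, eq_div_iff hM, ← inversion, mul_comm]

end BochnerRiesz

/-- The Fourier transform `ŵ` of `w(t) = ₀F₁(α; -t²/4)` satisfies the ODE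
`(1-x²) ŵ'(x) + (2α-3) x ŵ(x) = 0` away from `x = ±1`. -/
theorem stmt_8 (α : ℝ) (hα : 5 / 2 < α)
    (w : ℝ → ℝ)
    (hw : w = fun t : ℝ => ∑' ℓ : ℕ,
      Real.Gamma α / (Real.Gamma (α + ℓ) * (Nat.factorial ℓ : ℝ)) * (-t ^ 2 / 4) ^ ℓ)
    (what : ℝ → ℝ)
    (hwhat : what = fun x : ℝ => (1 / (2 * Real.pi)) * ∫ t : ℝ, Real.cos (t * x) * w t) :
    ∀ x : ℝ, x ≠ 1 → x ≠ -1 →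
      DifferentiableAt ℝ what x ∧
      (1 - x ^ 2) * deriv what x + (2 * α - 3) * x * what x = 0 := by
  obtain ⟨c, hc⟩ : ∃ c, what = fun x ↦ c * bochnerRiesz (α - 3 / 2) x := by
    refine ⟨1 / (2 * π) * (2 * π / ∫ s, bochnerRiesz (α - 3 / 2) s), ?_⟩
    ext x
    rw [hwhat, hw, mul_assoc, ← cosTransform_zeroFOne hα]
    rfl
  intro x hx₁ hx₂
  have hderiv : HasDerivAt what _ x :=
    hc ▸ (hasDerivAt_bochnerRiesz (α - 3 / 2) (by simp [hx₁, hx₂])).const_mul c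
  have hmul := one_sub_sq_mul_bochnerRiesz (α - 3 / 2 - 1) x
  rw [sub_add_cancel] at hmul
  refine ⟨hderiv.differentiableAt, ?_⟩
  rw [hderiv.deriv, hc]
  linear_combination -(2 * α - 3) * x * c * hmul
end

section
/- Let α > 0 be real and let u, z ∈ ℝ. Then ₀F₁(α; u·z) = ∑_{j=0}^∞ (Γ(α)/(Γ(α+j)·j!))·₀F₁(α + j; u)·u^j·(z − 1)^j, where the series on the right converges absolutely. -/
open Real

/-- The confluent hypergeometric limit function
`₀F₁(a; u) = ∑ₗ Γ(a)/(Γ(a+ℓ)·ℓ!) · uˡ`. -/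
noncomputable def hyp0F1 (a u : ℝ) : ℝ :=
  ∑' ℓ : ℕ, Real.Gamma a / (Real.Gamma (a + ℓ) * (Nat.factorial ℓ : ℝ)) * u ^ ℓ

/-!
Writing `uz = u(z - 1) + u`, the claim is the Taylor expansion of `₀F₁(α; ·)` around `u`, whose
coefficients are again values of `₀F₁` because `Γ(α)/Γ(α+j+l) = Γ(α)/Γ(α+j) · Γ(α+j)/Γ(α+j+l)`.
For any power series `∑ₙ aₙ (x + y)ⁿ`, the expansion around `y` rearranges the double series
obtained from the binomial theorem. The terms of that double series are dominated in norm by a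
nonnegative family whose antidiagonal sums are `‖aₙ‖ (‖x‖ + ‖y‖)ⁿ`, so it converges absolutely as
soon as these are summable.
-/

section BinomialExpansion

open Finset.HasAntidiagonal (antidiagonal mem_antidiagonal sigmaAntidiagonalEquivProd)

/-- The monomial of bidegree `p` in the expansion of the power series `∑ₙ aₙ (x + y)ⁿ` by the
binomial theorem. Summing along antidiagonals recovers that series; summing over `p.2` first gives
its Taylor expansion around `y`. -/
def binomialTerm {R : Type*} [Semiring R] (a : ℕ → R) (x y : R) (p : ℕ × ℕ) : R :=
  a (p.1 + p.2) * ((p.1 + p.2).choose p.1 • (x ^ p.1 * y ^ p.2))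

lemma sum_antidiagonal_binomialTerm {R : Type*} [CommSemiring R] (a : ℕ → R) (x y : R) (n : ℕ) :
    ∑ p ∈ antidiagonal n, binomialTerm a x y p = a n * (x + y) ^ n := by
  rw [(Commute.all x y).add_pow', Finset.mul_sum]
  refine Finset.sum_congr rfl fun p hp => ?_
  rw [binomialTerm, mem_antidiagonal.mp hp]

lemma binomialTerm_nonneg {R : Type*} [Semiring R] [PartialOrder R] [IsOrderedRing R]
    {a : ℕ → R} {x y : R} (ha : ∀ n, 0 ≤ a n) (hx : 0 ≤ x) (hy : 0 ≤ y) (p : ℕ × ℕ) :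
    0 ≤ binomialTerm a x y p :=
  mul_nonneg (ha _) (nsmul_nonneg (mul_nonneg (pow_nonneg hx _) (pow_nonneg hy _)) _)

lemma summable_binomialTerm_of_nonneg {a : ℕ → ℝ} {x y : ℝ} (ha : ∀ n, 0 ≤ a n) (hx : 0 ≤ x)
    (hy : 0 ≤ y) (h : Summable fun n => a n * (x + y) ^ n) : Summable (binomialTerm a x y) := by
  rw [← (sigmaAntidiagonalEquivProd (A := ℕ)).summable_iff]
  refine (summable_sigma_of_nonneg fun _ => binomialTerm_nonneg ha hx hy _).mpr
    ⟨fun n => (Finset.hasSum (antidiagonal n) (binomialTerm a x y)).summable,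
      h.congr fun n => ?_⟩
  rw [← sum_antidiagonal_binomialTerm]
  exact ((antidiagonal n).tsum_subtype (binomialTerm a x y)).symm

variable {R : Type*} [NormedCommRing R] [NormOneClass R]

lemma norm_binomialTerm_le (a : ℕ → R) (x y : R) (p : ℕ × ℕ) :
    ‖binomialTerm a x y p‖ ≤ binomialTerm (fun n => ‖a n‖) ‖x‖ ‖y‖ p := by
  refine norm_mul_le_of_le le_rfl (norm_nsmul_le.trans ?_)
  rw [nsmul_eq_mul]
  gcongr
  exact norm_mul_le_of_le (norm_pow_le x p.1) (norm_pow_le y p.2)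

variable [CompleteSpace R] {a : ℕ → R} {x y : R}

lemma summable_binomialTerm (h : Summable fun n => ‖a n‖ * (‖x‖ + ‖y‖) ^ n) :
    Summable (binomialTerm a x y) :=
  .of_norm_bounded
    (summable_binomialTerm_of_nonneg (fun n => norm_nonneg (a n)) (norm_nonneg x) (norm_nonneg y) h)
    (norm_binomialTerm_le a x y)

lemma tsum_binomialTerm (h : Summable fun n => ‖a n‖ * (‖x‖ + ‖y‖) ^ n) :
    ∑' p, binomialTerm a x y p = ∑' n, a n * (x + y) ^ n := by
  have hsigma := (sigmaAntidiagonalEquivProd (A := ℕ)).hasSum_iff.mpr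
    (summable_binomialTerm h).hasSum
  have hdiag := hsigma.sigma fun n => Finset.hasSum (antidiagonal n) (binomialTerm a x y)
  simpa only [sum_antidiagonal_binomialTerm] using hdiag.tsum_eq.symm

theorem hasSum_tsum_binomialTerm (h : Summable fun n => ‖a n‖ * (‖x‖ + ‖y‖) ^ n) :
    HasSum (fun j => ∑' l, binomialTerm a x y (j, l)) (∑' n, a n * (x + y) ^ n) := by
  have hs := summable_binomialTerm h
  rw [← tsum_binomialTerm h]
  exact hs.hasSum.prod_fiberwise fun j => (hs.prod_factor j).hasSum

end BinomialExpansion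

lemma one_le_Gamma_of_two_le {x : ℝ} (hx : 2 ≤ x) : 1 ≤ Gamma x := by
  simpa only [Gamma_two] using Gamma_strictMonoOn_Ici.monotoneOn Set.self_mem_Ici hx hx

/-- The coefficient of `u ^ n` in `₀F₁(a; u)`. -/
noncomputable def hyp0F1Coeff (a : ℝ) (n : ℕ) : ℝ :=
  Gamma a / (Gamma (a + n) * (n.factorial : ℝ))

lemma summable_norm_hyp0F1Coeff_mul_pow (a r : ℝ) :
    Summable fun n => ‖hyp0F1Coeff a n‖ * r ^ n := by
  refine .of_norm_bounded_eventually_nat ((summable_pow_div_factorial |r|).mul_left |Gamma a|) ?_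
  filter_upwards [(tendsto_natCast_atTop_atTop (R := ℝ)).eventually_ge_atTop (2 - a)] with n hn
  have hΓ : 1 ≤ |Gamma (a + n)| :=
    (one_le_Gamma_of_two_le (by linarith)).trans (le_abs_self _)
  calc ‖‖hyp0F1Coeff a n‖ * r ^ n‖
      = |Gamma a| / |Gamma (a + n)| * (|r| ^ n / (n.factorial : ℝ)) := by
        simp only [hyp0F1Coeff, norm_eq_abs, abs_mul, abs_div, abs_abs, abs_pow, Nat.abs_cast]
        ring
    _ ≤ |Gamma a| * (|r| ^ n / (n.factorial : ℝ)) := by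
        gcongr
        exact div_le_self (abs_nonneg _) hΓ

lemma hyp0F1Coeff_add_mul_choose {a : ℝ} {j : ℕ} (hj : Gamma (a + j) ≠ 0) (l : ℕ) :
    hyp0F1Coeff a (j + l) * (j + l).choose j = hyp0F1Coeff a j * hyp0F1Coeff (a + j) l := by
  have hfact : ((j + l).factorial : ℝ) ≠ 0 := by positivity
  simp only [hyp0F1Coeff, Nat.cast_add_choose ℝ, Nat.cast_add, ← add_assoc]
  field_simp

lemma tsum_binomialTerm_hyp0F1Coeff {a : ℝ} {j : ℕ} (hj : Gamma (a + j) ≠ 0) (x y : ℝ) :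
    ∑' l, binomialTerm (hyp0F1Coeff a) x y (j, l) =
      hyp0F1Coeff a j * hyp0F1 (a + j) y * x ^ j := by
  change _ = hyp0F1Coeff a j * (∑' l, hyp0F1Coeff (a + j) l * y ^ l) * x ^ j
  rw [← tsum_mul_left, ← tsum_mul_right]
  refine tsum_congr fun l => ?_
  rw [binomialTerm, nsmul_eq_mul, ← mul_assoc, hyp0F1Coeff_add_mul_choose hj]
  ring

theorem hasSum_hyp0F1_add {a : ℝ} (ha : ∀ m : ℕ, a ≠ -m) (x y : ℝ) :
    HasSum (fun j => hyp0F1Coeff a j * hyp0F1 (a + j) y * x ^ j) (hyp0F1 a (x + y)) := by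
  have hΓ (j : ℕ) : Gamma (a + j) ≠ 0 :=
    Gamma_ne_zero fun m hm => ha (m + j) (by push_cast; linarith)
  simp only [← tsum_binomialTerm_hyp0F1Coeff (hΓ _)]
  exact hasSum_tsum_binomialTerm (summable_norm_hyp0F1Coeff_mul_pow a (‖x‖ + ‖y‖))

theorem stmt_12_general (α : ℝ) (hα : ∀ m : ℕ, α ≠ -m) (u z : ℝ) :
    Summable (fun j : ℕ =>
      |Real.Gamma α / (Real.Gamma (α + j) * (Nat.factorial j : ℝ)) *
        hyp0F1 (α + j) u * u ^ j * (z - 1) ^ j|) ∧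
    HasSum (fun j : ℕ =>
      Real.Gamma α / (Real.Gamma (α + j) * (Nat.factorial j : ℝ)) *
        hyp0F1 (α + j) u * u ^ j * (z - 1) ^ j)
      (hyp0F1 α (u * z)) := by
  have hsum := hasSum_hyp0F1_add hα (u * (z - 1)) u
  rw [show u * (z - 1) + u = u * z by ring] at hsum
  simp only [mul_pow, ← mul_assoc] at hsum
  exact ⟨hsum.summable.abs, hsum⟩

/-- The expansion of `₀F₁(α; uz)` around `z = 1`:
`₀F₁(α; uz) = ∑ⱼ Γ(α)/(Γ(α+j)·j!) · ₀F₁(α+j; u) · uʲ (z-1)ʲ`, converging absolutely. -/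
theorem stmt_12 (α : ℝ) (hα : 0 < α) (u z : ℝ) :
    Summable (fun j : ℕ =>
      |Real.Gamma α / (Real.Gamma (α + j) * (Nat.factorial j : ℝ)) *
        hyp0F1 (α + j) u * u ^ j * (z - 1) ^ j|) ∧
    HasSum (fun j : ℕ =>
      Real.Gamma α / (Real.Gamma (α + j) * (Nat.factorial j : ℝ)) *
        hyp0F1 (α + j) u * u ^ j * (z - 1) ^ j)
      (hyp0F1 α (u * z)) :=
  stmt_12_general α (fun m => ((neg_nonpos.mpr m.cast_nonneg).trans_lt hα).ne') u z
end

section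
/- Let N ≥ 2 be an integer and define f : (−1, 1) → ℝ by f(x) = (1/N)·∑_{j=0}^{N−1} C(N, j+1)·(Γ(N²/2)/(2^j·√π·Γ((N²−1)/2 + j)·j!))·D^{2j}[(1 − y²)^{(N²−3)/2 + j}](x), where D^{2j}[g](x) denotes the 2j-th derivative of g evaluated at x, C(N, j+1) is a binomial coefficient, and Γ is the Gamma function. Then there exists a polynomial p_N with real coefficients such that for every x with −1 < x < 1, f(x) = p_N(x)·(1 − x²)^{(N² − 2N − 1)/2}. (The function f is the empirical spectral density f(x, S₂(N, 1)) of the spherical unitary ensemble of radius 1, and this result expresses it as a polynomial multiple of a power of 1 − x².) -/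
open Real

/-!
Differentiating a function of the form `q · P ^ b`, with `P` and `q` polynomials, gives
`(q' P + b q P') · P ^ (b - 1)`, so every derivative costs exactly one power of `P`. For
`P = 1 - X ^ 2` the `j`-th summand of the density is therefore a polynomial times `P` to the power
`(N ^ 2 - 3) / 2 - j`. This exceeds `(N ^ 2 - 2 N - 1) / 2` by the natural number `N - 1 - j`, and
the surplus power of `P` is absorbed into the polynomial factor.
-/

section PolynomialMulRpow

open Polynomial

theorem hasDerivAt_eval_mul_eval_rpow (P q : ℝ[X]) (b : ℝ) {x : ℝ} (hx : P.eval x ≠ 0) :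
    HasDerivAt (fun y => q.eval y * P.eval y ^ b)
      ((derivative q * P + C b * q * derivative P).eval x * P.eval x ^ (b - 1)) x := by
  have rpow_eq_mul_rpow_sub_one : P.eval x ^ b = P.eval x * P.eval x ^ (b - 1) := by
    rw [rpow_sub_one hx, mul_div_cancel₀ _ hx]
  refine ((q.hasDerivAt x).mul ((P.hasDerivAt x).rpow_const (Or.inl hx))).congr_deriv ?_
  simp only [rpow_eq_mul_rpow_sub_one, eval_add, eval_mul, eval_C]
  ring

/-- The space of functions that are a polynomial multiple of `P ^ b` off the zeros of `P`. The zeros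
are excluded because `P ^ b` need not be differentiable there; the values of the functions at the
zeros are unconstrained. Where `P` is negative, `P ^ b` follows the convention of `Real.rpow`. -/
def polynomialMulRpow (P : ℝ[X]) (b : ℝ) : Submodule ℝ (ℝ → ℝ) where
  carrier := {f | ∃ q : ℝ[X], ∀ x, P.eval x ≠ 0 → f x = q.eval x * P.eval x ^ b}
  zero_mem' := ⟨0, fun x _ => by simp⟩
  add_mem' := by
    rintro f g ⟨p, hp⟩ ⟨q, hq⟩
    exact ⟨p + q, fun x hx => by simp [hp x hx, hq x hx, add_mul]⟩
  smul_mem' := by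
    rintro c f ⟨q, hq⟩
    exact ⟨c • q, fun x hx => by simp [hq x hx, mul_assoc]⟩

namespace polynomialMulRpow

variable {P : ℝ[X]} {b : ℝ} {f : ℝ → ℝ}

theorem eval_rpow_mem (P : ℝ[X]) (b : ℝ) : (fun x => P.eval x ^ b) ∈ polynomialMulRpow P b :=
  ⟨1, fun x _ => by simp⟩

theorem add_natCast_le (P : ℝ[X]) (b : ℝ) (n : ℕ) :
    polynomialMulRpow P (b + n) ≤ polynomialMulRpow P b := by
  rintro f ⟨q, hq⟩
  refine ⟨q * P ^ n, fun x hx => ?_⟩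
  rw [hq x hx, rpow_add_natCast hx, eval_mul, eval_pow]
  ring

theorem deriv_mem (hf : f ∈ polynomialMulRpow P b) : deriv f ∈ polynomialMulRpow P (b - 1) := by
  obtain ⟨q, hq⟩ := hf
  refine ⟨derivative q * P + C b * q * derivative P, fun x hx => ?_⟩
  have f_eq_near : f =ᶠ[nhds x] fun y => q.eval y * P.eval y ^ b :=
    (P.continuous.continuousAt.eventually_ne hx).mono hq
  rw [f_eq_near.deriv_eq, (hasDerivAt_eval_mul_eval_rpow P q b hx).deriv]

theorem iteratedDeriv_mem (hf : f ∈ polynomialMulRpow P b) (k : ℕ) :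
    iteratedDeriv k f ∈ polynomialMulRpow P (b - k) := by
  induction k with
  | zero => simpa using hf
  | succ k ih =>
    rw [iteratedDeriv_succ, Nat.cast_succ, ← sub_sub]
    exact deriv_mem ih

theorem iteratedDeriv_eval_rpow_mem (P : ℝ[X]) {a b : ℝ} {k n : ℕ} (h : a - k = b + n) :
    iteratedDeriv k (fun x => P.eval x ^ a) ∈ polynomialMulRpow P b :=
  add_natCast_le P b n (h ▸ iteratedDeriv_mem (eval_rpow_mem P a) k)

end polynomialMulRpow

end PolynomialMulRpow

/-- The empirical spectral density `f(x, S₂(N,1))` of the spherical unitary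
ensemble of radius `1` equals `p_N(x)·(1-x²)^{(N²-2N-1)/2}` for some polynomial `p_N`. -/
theorem stmt_15 (N : ℕ) (hN : 2 ≤ N) :
    ∃ p : Polynomial ℝ, ∀ x : ℝ, -1 < x → x < 1 →
      (1 / (N : ℝ)) * ∑ j ∈ Finset.range N, (N.choose (j + 1) : ℝ) *
          (Real.Gamma ((N : ℝ) ^ 2 / 2) /
            (2 ^ j * Real.sqrt Real.pi * Real.Gamma (((N : ℝ) ^ 2 - 1) / 2 + j) *
              (Nat.factorial j : ℝ))) *
          iteratedDeriv (2 * j) (fun y : ℝ => (1 - y ^ 2) ^ (((N : ℝ) ^ 2 - 3) / 2 + j)) x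
        = p.eval x * (1 - x ^ 2) ^ (((N : ℝ) ^ 2 - 2 * N - 1) / 2) := by
  let P : Polynomial ℝ := 1 - Polynomial.X ^ 2
  have eval_P (x : ℝ) : P.eval x = 1 - x ^ 2 := by simp [P]
  have summand_mem : ∀ j ∈ Finset.range N,
      iteratedDeriv (2 * j) (fun y : ℝ => (1 - y ^ 2) ^ (((N : ℝ) ^ 2 - 3) / 2 + j)) ∈
        polynomialMulRpow P (((N : ℝ) ^ 2 - 2 * N - 1) / 2) := by
    intro j hj
    obtain ⟨n, rfl⟩ := Nat.exists_eq_add_of_lt (Finset.mem_range.1 hj)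
    simp only [← eval_P]
    exact polynomialMulRpow.iteratedDeriv_eval_rpow_mem P (n := n) (by push_cast; ring)
  obtain ⟨p, hp⟩ := Submodule.smul_mem _ (1 / (N : ℝ))
    (Submodule.sum_mem _ fun j hj => Submodule.smul_mem _ ((N.choose (j + 1) : ℝ) *
      (Gamma ((N : ℝ) ^ 2 / 2) /
        (2 ^ j * √π * Gamma (((N : ℝ) ^ 2 - 1) / 2 + j) * (Nat.factorial j : ℝ))))
      (summand_mem j hj))
  refine ⟨p, fun x h₁ h₂ => ?_⟩
  have eval_ne_zero : P.eval x ≠ 0 := by rw [eval_P]; nlinarith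
  simpa only [eval_P, Pi.smul_apply, Finset.sum_apply, smul_eq_mul] using hp x eval_ne_zero
end
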